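/- arXiv:1402.5384 — 2 statements merged into one kernel-verified Lean document; each statement's English description precedes it below -/
import Mathlib

section
/- Let I ≥ 2, J ≥ 2, let ν = (ν_1,...,ν_I)^T and π = (π_1,...,π_J)^T be probability vectors with all entries positive, with truncations ν* = (ν_1,...,ν_{I-1})^T and π* = (π_1,...,π_{J-1})^T. Let R be the (I-1)(J-1) × I(J-1) matrix R = (0_{(I-1)(J-1)×(J-1)} , G_{I-1} ⊗ G_{J-1}) (a zero block followed by the Kronecker product). Let I_F be the I(J-1) × I(J-1) matrix I_F = M ⊗ (D_{π*} − π* π*^T), where M is the I × I matrix with (1,1)-entry 1, first row (after the corner) ν*^T, first column (after the corner) ν*, and lower-right block D_{ν*}. Then I_F is invertible and R I_F^{-1} R^T = K(ν) ⊗ K(π), where K(q) = G_{K-1} D_{q*}^{-1} G_{K-1}^T + (1/q_K) e_{K-1} e_{K-1}^T for a probability vector q of length K with truncation q*. -/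
open Matrix
open scoped Kronecker

/-- `G_h`: the h×h matrix with 1's on the diagonal, −1's on the superdiagonal. -/
def Gmat (h : ℕ) : Matrix (Fin h) (Fin h) ℝ :=
  Matrix.of fun i j => if i = j then 1 else if (j : ℕ) = (i : ℕ) + 1 then -1 else 0

/-- `e_{K-1}`: the last standard unit vector of ℝ^{K-1}. -/
def lastUnitVec (h : ℕ) : Fin h → ℝ := fun i => if (i : ℕ) + 1 = h then 1 else 0

/-- `K(q) = G_{K-1} D_{q*}⁻¹ G_{K-1}ᵀ + (1/q_K) e_{K-1} e_{K-1}ᵀ`. -/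
noncomputable def Kmat {K : ℕ} (q : Fin (K + 1) → ℝ) : Matrix (Fin K) (Fin K) ℝ :=
  Gmat K * Matrix.diagonal (fun j : Fin K => (q j.castSucc)⁻¹) * (Gmat K)ᵀ +
    (1 / q (Fin.last K)) • Matrix.vecMulVec (lastUnitVec K) (lastUnitVec K)

noncomputable def Smat {K : ℕ} (q : Fin (K + 1) → ℝ) : Matrix (Fin K) (Fin K) ℝ :=
  Matrix.diagonal (fun j : Fin K => (q j.castSucc)⁻¹) +
    (1 / q (Fin.last K)) • Matrix.vecMulVec (fun _ => 1) (fun _ => 1)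

lemma Gmat_one (h : ℕ) : Gmat h *ᵥ (fun _ => (1 : ℝ)) = lastUnitVec h := by
  ext i
  simp only [Gmat, lastUnitVec, Matrix.mulVec, dotProduct, Matrix.of_apply, mul_one]
  have h1 : ∀ j : Fin h, (if i = j then (1 : ℝ) else if (j : ℕ) = (i : ℕ) + 1 then -1 else 0)
      = (if i = j then 1 else 0) + (if (j : ℕ) = (i : ℕ) + 1 then -1 else 0) := by
    intro j
    by_cases hij : i = j
    · subst hij; simp
    · simp [hij]
  rw [Finset.sum_congr rfl (fun j _ => h1 j), Finset.sum_add_distrib]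
  by_cases hi : (i : ℕ) + 1 = h
  · have h2 : ∀ j : Fin h, ¬ ((j : ℕ) = (i : ℕ) + 1) := fun j => by have := j.2; omega
    simp only [h2]
    simp [hi]
  · have h3 : (i : ℕ) + 1 < h := by have := i.2; omega
    have h2 : ∀ j : Fin h, ((j : ℕ) = (i : ℕ) + 1) ↔ (⟨(i : ℕ) + 1, h3⟩ : Fin h) = j := fun j => by
      rw [Fin.ext_iff]; simp [eq_comm]
    simp only [h2]
    simp [hi]

lemma Gmat_Smat {K : ℕ} (q : Fin (K + 1) → ℝ) :
    Gmat K * Smat q * (Gmat K)ᵀ = Kmat q := by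
  simp only [Smat, Kmat, Matrix.mul_add, Matrix.add_mul, Matrix.mul_smul, Matrix.smul_mul,
    Matrix.mul_vecMulVec, Matrix.vecMulVec_mul, Matrix.vecMul_transpose, Gmat_one]

lemma Smat_inv {K : ℕ} (q : Fin (K + 1) → ℝ) (hpos : ∀ i, 0 < q i) (hsum : ∑ i, q i = 1) :
    (Matrix.diagonal (fun j : Fin K => q j.castSucc) -
        Matrix.vecMulVec (fun j : Fin K => q j.castSucc) (fun j : Fin K => q j.castSucc))
      * Smat q = 1 := by
  rw [Fin.sum_univ_castSucc] at hsum
  have hs : ∑ j : Fin K, q j.castSucc = 1 - q (Fin.last K) := by linarith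
  have hl := (hpos (Fin.last K)).ne'
  ext i j
  have hj := (hpos j.castSucc).ne'
  have hi := (hpos i.castSucc).ne'
  simp only [Smat, Matrix.sub_mul, Matrix.mul_add, Matrix.sub_apply, Matrix.add_apply,
    Matrix.diagonal_mul_diagonal, Matrix.diagonal_mul, Matrix.mul_diagonal, Matrix.mul_smul,
    Matrix.smul_apply, Matrix.vecMulVec_apply, smul_eq_mul, mul_one]
  have e2 : (Matrix.vecMulVec (fun j : Fin K => q j.castSucc) (fun j : Fin K => q j.castSucc)
      * Matrix.vecMulVec (fun _ : Fin K => (1 : ℝ)) (fun _ : Fin K => (1 : ℝ))) i j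
      = q i.castSucc * (1 - q (Fin.last K)) := by
    simp [Matrix.mul_apply, Matrix.vecMulVec_apply, ← Finset.mul_sum, hs]
  rw [e2]
  by_cases hij : i = j
  · subst hij
    simp only [Matrix.diagonal_apply_eq, Matrix.one_apply_eq]
    field_simp
    ring
  · simp only [Matrix.diagonal_apply_ne _ hij, Matrix.one_apply_ne hij]
    field_simp
    ring

noncomputable def Minv {k : ℕ} (ν : Fin (k + 1) → ℝ) :
    Matrix (Unit ⊕ Fin k) (Unit ⊕ Fin k) ℝ :=
  Matrix.fromBlocks (Matrix.of fun _ _ => 1 / ν (Fin.last k))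
    (Matrix.of fun _ _ => - (1 / ν (Fin.last k)))
    (Matrix.of fun _ _ => - (1 / ν (Fin.last k))) (Smat ν)

lemma M_mul_Minv {k : ℕ} (ν : Fin (k + 1) → ℝ) (hpos : ∀ i, 0 < ν i) (hsum : ∑ i, ν i = 1) :
    Matrix.fromBlocks (1 : Matrix Unit Unit ℝ) (Matrix.of fun _ j => ν j.castSucc)
        (Matrix.of fun i _ => ν i.castSucc) (Matrix.diagonal fun i : Fin k => ν i.castSucc)
      * Minv ν = 1 := by
  rw [Fin.sum_univ_castSucc] at hsum
  have hs : ∑ j : Fin k, ν j.castSucc = 1 - ν (Fin.last k) := by linarith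
  have hl := (hpos (Fin.last k)).ne'
  rw [Minv, Matrix.fromBlocks_multiply, ← Matrix.fromBlocks_one]
  congr 1
  · ext i j
    simp [Matrix.mul_apply, ← Finset.sum_mul, hs]
    field_simp
    ring
  · ext i j
    have hj := (hpos j.castSucc).ne'
    simp [Matrix.mul_apply, Smat, Matrix.vecMulVec_apply, mul_add, Finset.sum_add_distrib,
      ← Finset.sum_mul, hs, Matrix.diagonal_apply]
    field_simp
    ring
  · ext i j
    simp [Matrix.mul_apply, Matrix.diagonal_apply]
  · ext i j
    have hi := (hpos i.castSucc).ne'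
    by_cases hij : i = j
    · subst hij
      simp [Matrix.diagonal_mul, Smat, Matrix.vecMulVec_apply, Matrix.mul_apply, mul_add,
        Matrix.diagonal_apply, hi]
      ring
    · simp [Matrix.diagonal_mul, Smat, Matrix.vecMulVec_apply, Matrix.mul_apply, mul_add,
        Matrix.diagonal_apply, hij]
      ring

/-- central computation of Theorem 2 of the paper: with
`I = k+1`, `J = m+1`, `R = (0 | G_{I-1} ⊗ G_{J-1})` and
`I_F = M ⊗ (D_{π*} − π* π*ᵀ)`, the Fisher information matrix `I_F` is
invertible and `R I_F⁻¹ Rᵀ = K(ν) ⊗ K(π)`.  Columns of `I_F` of size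
`I(J-1)` are indexed by `(Unit ⊕ Fin k) × Fin m` (the `Unit` block carrying
the nuisance parameters θ₂). -/
theorem stmt5 (k m : ℕ) (hk : 1 ≤ k) (hm : 1 ≤ m)
    (ν : Fin (k + 1) → ℝ) (hνpos : ∀ i, 0 < ν i) (hνsum : ∑ i, ν i = 1)
    (pi : Fin (m + 1) → ℝ) (hπpos : ∀ j, 0 < pi j) (hπsum : ∑ j, pi j = 1)
    -- R = (0_{(I-1)(J-1)×(J-1)} , G_{I-1} ⊗ G_{J-1})
    (R : Matrix (Fin k × Fin m) ((Unit ⊕ Fin k) × Fin m) ℝ)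
    (hR : R = Matrix.of fun p c =>
        Sum.elim (fun _ => (0 : ℝ)) (fun i' => (Gmat k ⊗ₖ Gmat m) p (i', c.2)) c.1)
    -- M : I × I, corner 1, first row ν*ᵀ, first column ν*, lower-right block D_{ν*}
    (M : Matrix (Unit ⊕ Fin k) (Unit ⊕ Fin k) ℝ)
    (hM : M = Matrix.fromBlocks 1 (Matrix.of fun _ j => ν j.castSucc)
        (Matrix.of fun i _ => ν i.castSucc) (Matrix.diagonal fun i => ν i.castSucc))
    -- I_F = M ⊗ (D_{π*} − π* π*ᵀ)
    (IF : Matrix ((Unit ⊕ Fin k) × Fin m) ((Unit ⊕ Fin k) × Fin m) ℝ)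
    (hIF : IF = M ⊗ₖ (Matrix.diagonal (fun j : Fin m => pi j.castSucc) -
        Matrix.vecMulVec (fun j : Fin m => pi j.castSucc) (fun j : Fin m => pi j.castSucc))) :
    IsUnit IF ∧ R * IF⁻¹ * Rᵀ = Kmat ν ⊗ₖ Kmat pi := by
  have hA := M_mul_Minv ν hνpos hνsum
  rw [← hM] at hA
  have hB := Smat_inv pi hπpos hπsum
  have hmul : IF * (Minv ν ⊗ₖ Smat pi) = 1 := by
    rw [hIF, ← Matrix.mul_kronecker_mul, hA, hB, Matrix.one_kronecker_one]
  have hinv : IF⁻¹ = Minv ν ⊗ₖ Smat pi := Matrix.inv_eq_right_inv hmul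
  refine ⟨IsUnit.of_mul_eq_one _ hmul, ?_⟩
  have hR' : R = (Matrix.fromCols (0 : Matrix (Fin k) Unit ℝ) (Gmat k)) ⊗ₖ Gmat m := by
    rw [hR]
    ext p ⟨c, d⟩
    rcases c with c | c <;> simp [Matrix.kroneckerMap_apply]
  have hT : Rᵀ = (Matrix.fromCols (0 : Matrix (Fin k) Unit ℝ) (Gmat k))ᵀ ⊗ₖ (Gmat m)ᵀ := by
    rw [hR', Matrix.kroneckerMap_transpose]
  rw [hinv, hT, hR', ← Matrix.mul_kronecker_mul, ← Matrix.mul_kronecker_mul, Gmat_Smat,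
    Matrix.transpose_fromCols, Minv, Matrix.fromCols_mul_fromBlocks,
    Matrix.fromCols_mul_fromRows]
  simp [Gmat_Smat]
end

section
/- Let k ≥ 1 and let μ be the standard Gaussian measure on ℝ^k (the product of k copies of the standard normal distribution N(0,1)). Let Q be a k×k real symmetric idempotent matrix with rank(Q) = r ≥ 1, and let d_1,...,d_m ∈ ℝ^k be vectors such that for each i, either Q d_i = 0 or Q d_i = d_i. Let C = {y ∈ ℝ^k : ⟨d_i, y⟩ ≥ 0 for all i = 1,...,m} and assume μ(C) > 0. Then for every x ≥ 0, μ({y ∈ C : y^T Q y ≤ x}) / μ(C) = P(χ²_r ≤ x), where χ²_r denotes the chi-square distribution with r degrees of freedom (the Gamma distribution with shape r/2 and rate 1/2). In other words, conditionally on the event C, the quadratic form y^T Q y has a chi-square distribution with rank(Q) degrees of freedom. -/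
open Matrix MeasureTheory ProbabilityTheory
open scoped Pointwise

lemma pi_gauss_density {ι : Type*} [Fintype ι] :
    (Measure.pi fun _ : ι => gaussianReal 0 1) =
      (volume : Measure (ι → ℝ)).withDensity
        (fun y => ENNReal.ofReal (∏ i, gaussianPDFReal 0 1 (y i))) := by
  refine Measure.pi_eq fun s hs => ?_
  rw [withDensity_apply _ (MeasurableSet.univ_pi hs), volume_pi, Measure.restrict_pi_pi]
  rw [← ofReal_integral_eq_lintegral_ofReal]
  · rw [integral_fintype_prod_eq_prod (fun _ => gaussianPDFReal 0 1), ENNReal.ofReal_prod_of_nonneg]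
    · refine Finset.prod_congr rfl fun i _ => ?_
      rw [gaussianReal_apply_eq_integral _ one_ne_zero]
    · intro i _
      exact integral_nonneg (gaussianPDFReal_nonneg _ _)
  · exact Integrable.fintype_prod (f := fun _ => gaussianPDFReal 0 1)
      fun i => (integrable_gaussianPDFReal 0 1).restrict
  · exact ae_of_all _ fun y => Finset.prod_nonneg fun i _ => gaussianPDFReal_nonneg _ _ _

lemma lintegral_w {p : ℝ} (hp : 0 < p) {x : ℝ} (hx : 0 ≤ x) :
    ∫⁻ t in Set.Iic x, ENNReal.ofReal (if 0 ≤ t then p * t ^ (p - 1) else 0) =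
      ENNReal.ofReal (x ^ p) := by
  have h1 : ∀ t : ℝ, (Set.Iic x).indicator
      (fun t => ENNReal.ofReal (if 0 ≤ t then p * t ^ (p - 1) else 0)) t =
      (Set.Icc 0 x).indicator (fun t => ENNReal.ofReal (p * t ^ (p - 1))) t := by
    intro t
    by_cases h0 : 0 ≤ t <;> by_cases h2 : t ≤ x <;> simp [Set.indicator, h0, h2]
  rw [← lintegral_indicator measurableSet_Iic, lintegral_congr h1,
    lintegral_indicator measurableSet_Icc, ← restrict_Ioc_eq_restrict_Icc,
    ← ofReal_integral_eq_lintegral_ofReal, ← intervalIntegral.integral_of_le hx]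
  · rw [intervalIntegral.integral_const_mul, integral_rpow (Or.inl (by linarith))]
    congr 1
    rw [sub_add_cancel, Real.zero_rpow hp.ne']
    field_simp
    simp
  · rw [← IntegrableOn, ← intervalIntegrable_iff_integrableOn_Ioc_of_le hx]
    exact (intervalIntegral.intervalIntegrable_rpow' (by linarith)).const_mul _
  · filter_upwards [ae_restrict_mem measurableSet_Ioc] with t ht
    have := ht.1
    positivity

lemma map_sq {ι : Type*} [Fintype ι] [Nonempty ι] (S : Set (ι → ℝ)) (hS : MeasurableSet S)
    (hcone : ∀ c : ℝ, 0 < c → ∀ y ∈ S, c • y ∈ S) :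
    ((volume : Measure (ι → ℝ)).restrict S).map (fun y => ∑ i, y i ^ 2) =
      volume (S ∩ {y | ∑ i, y i ^ 2 ≤ 1}) •
      (volume : Measure ℝ).withDensity (fun t => ENNReal.ofReal
        (if 0 ≤ t then (Fintype.card ι / 2 : ℝ) * t ^ ((Fintype.card ι / 2 : ℝ) - 1) else 0)) := by
  have hq : Measurable (fun y : ι → ℝ => ∑ i, y i ^ 2) := by fun_prop
  have hp : (0:ℝ) < Fintype.card ι / 2 := by
    have := Fintype.card_pos (α := ι)
    positivity
  have hB : ∀ x : ℝ, (volume : Measure (ι → ℝ)) {y | ∑ i, y i ^ 2 ≤ x} < ⊤ := by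
    intro x
    refine lt_of_le_of_lt (measure_mono (t := Metric.closedBall 0 (√x)) ?_)
      measure_closedBall_lt_top
    intro y hy
    rw [mem_closedBall_zero_iff, pi_norm_le_iff_of_nonneg (Real.sqrt_nonneg _)]
    intro i
    apply Real.abs_le_sqrt
    exact (Finset.single_le_sum (f := fun i => y i ^ 2) (fun i _ => sq_nonneg _)
      (Finset.mem_univ i)).trans hy
  have hmap : ∀ x, ((volume : Measure (ι → ℝ)).restrict S).map (fun y => ∑ i, y i ^ 2) (Set.Iic x)
      = volume (S ∩ {y | ∑ i, y i ^ 2 ≤ x}) := by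
    intro x
    rw [Measure.map_apply hq measurableSet_Iic, Measure.restrict_apply (hq measurableSet_Iic),
      Set.inter_comm]
    rfl
  refine Measure.ext_of_generateFrom_of_iUnion (Set.range Set.Iic) (fun n : ℕ => Set.Iic (n : ℝ))
    ?_ isPiSystem_Iic ?_ (fun i => ⟨_, rfl⟩) ?_ ?_
  · rw [← borel_eq_generateFrom_Iic]; exact BorelSpace.measurable_eq
  · exact Set.iUnion_eq_univ_iff.2 fun x => exists_nat_ge x
  · intro i
    rw [hmap]
    exact ((measure_mono Set.inter_subset_right).trans_lt (hB _)).ne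
  · rintro _ ⟨x, rfl⟩
    rw [hmap, Measure.smul_apply, withDensity_apply _ measurableSet_Iic, smul_eq_mul]
    rcases lt_trichotomy x 0 with hx | rfl | hx
    · have h1 : {y : ι → ℝ | ∑ i, y i ^ 2 ≤ x} = ∅ := by
        ext y
        simp only [Set.mem_ofPred_eq, Set.mem_empty_iff_false, iff_false, not_le]
        exact hx.trans_le (Finset.sum_nonneg fun i _ => sq_nonneg _)
      rw [h1, setLIntegral_congr_fun (g := 0) measurableSet_Iic]
      · simp
      · intro t ht
        have : ¬ (0 ≤ t) := not_le.2 (lt_of_le_of_lt ht hx)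
        simp [this]
    · rw [lintegral_w hp le_rfl, Real.zero_rpow hp.ne']
      simp only [ENNReal.ofReal_zero, mul_zero]
      refine measure_mono_null (t := {0}) ?_ (measure_singleton _)
      rintro y ⟨-, hy⟩
      have h2 := (Finset.sum_eq_zero_iff_of_nonneg (fun i _ => sq_nonneg (y i))).1
        (le_antisymm hy (Finset.sum_nonneg fun i _ => sq_nonneg _))
      ext i
      simpa using h2 i (Finset.mem_univ i)
    · rw [lintegral_w hp hx.le]
      have h1 : S ∩ {y | ∑ i, y i ^ 2 ≤ x} = √x • (S ∩ {y | ∑ i, y i ^ 2 ≤ 1}) := by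
        have hs : 0 < √x := Real.sqrt_pos.2 hx
        ext y
        rw [Set.mem_smul_set_iff_inv_smul_mem₀ hs.ne']
        have e1 : (y ∈ S) ↔ (√x)⁻¹ • y ∈ S := by
          refine ⟨hcone _ (inv_pos.2 hs) y, fun h => ?_⟩
          have := hcone _ hs _ h
          rwa [smul_inv_smul₀ hs.ne'] at this
        have e2 : (∑ i, ((√x)⁻¹ • y) i ^ 2) = (∑ i, y i ^ 2) / x := by
          simp only [Pi.smul_apply, smul_eq_mul, mul_pow, inv_pow, Real.sq_sqrt hx.le]
          rw [← Finset.mul_sum]; field_simp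
        rw [Set.mem_inter_iff, Set.mem_inter_iff, ← e1, Set.mem_ofPred_eq, Set.mem_ofPred_eq, e2,
          div_le_one hx]
      rw [h1, Measure.addHaar_smul_of_nonneg _ (Real.sqrt_nonneg _), mul_comm]
      congr 2
      rw [Module.finrank_fintype_fun_eq_card, Real.sqrt_eq_rpow, ← Real.rpow_natCast,
        ← Real.rpow_mul hx.le]
      congr 1; ring

lemma gauss_cone_aux {ι : Type*} [Fintype ι] [Nonempty ι] (S : Set (ι → ℝ)) (hS : MeasurableSet S)
    (hcone : ∀ c : ℝ, 0 < c → ∀ y ∈ S, c • y ∈ S) : ∃ A : ENNReal, ∀ T : Set ℝ, MeasurableSet T →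
    (Measure.pi fun _ : ι => gaussianReal 0 1) (S ∩ {y | ∑ i, y i ^ 2 ∈ T}) =
      A * gammaMeasure ((Fintype.card ι : ℝ) / 2) (1 / 2) T := by
  have hq : Measurable (fun y : ι → ℝ => ∑ i, y i ^ 2) := by fun_prop
  set n := Fintype.card ι with hn
  have hp : (0:ℝ) < n / 2 := by
    have : 0 < n := Fintype.card_pos (α := ι)
    positivity
  set c : ℝ := (√(2 * Real.pi))⁻¹ ^ n
  have hc : 0 ≤ c := by positivity
  set p : ℝ := n / 2 with hpdef
  set a := (volume : Measure (ι → ℝ)) (S ∩ {y | ∑ i, y i ^ 2 ≤ 1})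
  set K : ℝ := (1 / 2) ^ p / Real.Gamma p / p
  have hG := Real.Gamma_pos_of_pos hp
  have hK : 0 < K := by positivity
  refine ⟨a * ENNReal.ofReal (c / K), fun T hT => ?_⟩
  have hpdf : ∀ y : ι → ℝ, ∏ i, gaussianPDFReal 0 1 (y i) =
      c * Real.exp (-(1 / 2 * ∑ i, y i ^ 2)) := by
    intro y
    simp only [gaussianPDFReal, Finset.prod_mul_distrib, ← Real.exp_sum]
    congr 1
    · rw [Finset.prod_const, Finset.card_univ, NNReal.coe_one, mul_one]
    · congr 1
      rw [Finset.mul_sum, ← Finset.sum_neg_distrib]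
      refine Finset.sum_congr rfl fun i _ => ?_
      simp; ring
  have hset : S ∩ {y | ∑ i, y i ^ 2 ∈ T} = (fun y => ∑ i, y i ^ 2) ⁻¹' T ∩ S := Set.inter_comm _ _
  rw [pi_gauss_density, hset, withDensity_apply _ ((hq hT).inter hS),
    ← Measure.restrict_restrict (hq hT)]
  simp only [hpdf]
  have h3 := setLIntegral_map (μ := (volume : Measure (ι → ℝ)).restrict S) hT
    (f := fun t => ENNReal.ofReal (c * Real.exp (-(1 / 2 * t)))) (by fun_prop) hq
  have hw : Measurable (fun t : ℝ => ENNReal.ofReal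
        (if 0 ≤ t then p * t ^ (p - 1) else 0)) := by
    refine ENNReal.measurable_ofReal.comp (Measurable.ite measurableSet_Ici ?_ measurable_const)
    fun_prop
  rw [← h3, map_sq S hS hcone, Measure.restrict_smul, lintegral_smul_measure,
    setLIntegral_withDensity_eq_setLIntegral_mul _ hw (by fun_prop) hT,
    gammaMeasure, withDensity_apply _ hT, smul_eq_mul, mul_assoc]
  congr 1
  rw [← lintegral_const_mul _ (by unfold gammaPDF; fun_prop)]
  refine lintegral_congr fun t => ?_
  rw [gammaPDF_eq, Pi.mul_apply, ← ENNReal.ofReal_mul (by split_ifs <;> positivity),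
    ← ENNReal.ofReal_mul (by positivity)]
  congr 1
  split_ifs with h
  · simp only [K]; field_simp
  · simp

lemma gauss_cone {ι : Type*} [Fintype ι] [Nonempty ι] (S : Set (ι → ℝ)) (hS : MeasurableSet S)
    (hcone : ∀ c : ℝ, 0 < c → ∀ y ∈ S, c • y ∈ S) (x : ℝ) :
    (Measure.pi fun _ : ι => gaussianReal 0 1) (S ∩ {y | ∑ i, y i ^ 2 ≤ x}) =
      (Measure.pi fun _ : ι => gaussianReal 0 1) S *
        gammaMeasure ((Fintype.card ι : ℝ) / 2) (1 / 2) (Set.Iic x) := by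
  obtain ⟨A, hA⟩ := gauss_cone_aux S hS hcone
  have hp : (0:ℝ) < Fintype.card ι / 2 := by
    have := Fintype.card_pos (α := ι)
    positivity
  have := isProbabilityMeasure_gammaMeasure hp (r := 1 / 2) (by norm_num)
  have h1 := hA Set.univ .univ
  simp only [Set.mem_univ, Set.ofPred_true, Set.inter_univ, measure_univ, mul_one] at h1
  rw [h1]
  exact hA _ measurableSet_Iic

lemma rot {k : ℕ} (b : OrthonormalBasis (Fin k) ℝ (EuclideanSpace ℝ (Fin k))) :
    MeasurePreserving (fun z : Fin k → ℝ => ∑ j, z j • (b j).ofLp)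
      (Measure.pi fun _ : Fin k => gaussianReal 0 1)
      (Measure.pi fun _ : Fin k => gaussianReal 0 1) := by
  refine ⟨by fun_prop, ?_⟩
  have h := stdGaussian_eq_map_pi_orthonormalBasis b
  rw [← map_pi_eq_stdGaussian] at h
  have h2 := congrArg (Measure.map (WithLp.ofLp (p := 2))) h
  rw [Measure.map_map (by fun_prop) (by fun_prop), Measure.map_map (by fun_prop) (by fun_prop)] at h2
  have e1 : (WithLp.ofLp (p := 2)) ∘ (WithLp.toLp 2) = (id : (Fin k → ℝ) → _) := rfl
  rw [e1, Measure.map_id] at h2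
  rw [eq_comm]
  convert h2 using 2
  ext z i
  simp

theorem stmt19 (k : ℕ) (hk : 1 ≤ k)
    (μ : Measure (Fin k → ℝ))
    (hμ : μ = Measure.pi fun _ : Fin k => gaussianReal 0 1)
    (Q : Matrix (Fin k) (Fin k) ℝ) (hQsym : Qᵀ = Q) (hQidem : Q * Q = Q)
    (r : ℕ) (hr : 1 ≤ r) (hrank : Q.rank = r)
    (m : ℕ) (d : Fin m → (Fin k → ℝ))
    (hd : ∀ i, Q.mulVec (d i) = 0 ∨ Q.mulVec (d i) = d i)
    (C : Set (Fin k → ℝ))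
    (hC : C = {y | ∀ i, 0 ≤ ∑ j, d i j * y j})
    (hμC : 0 < μ C) :
    ∀ x : ℝ, 0 ≤ x →
      μ {y ∈ C | y ⬝ᵥ Q.mulVec y ≤ x} / μ C =
        gammaMeasure ((r : ℝ) / 2) (1 / 2) (Set.Iic x) := by
  classical
  intro x hx
  have hH : Q.IsHermitian := by
    rw [Matrix.IsHermitian, Matrix.conjTranspose_eq_transpose_of_trivial, hQsym]
  set lam := hH.eigenvalues with hlam
  set u : Fin k → Fin k → ℝ := fun j => (hH.eigenvectorBasis j).ofLp with hu
  have hQu : ∀ j, Q *ᵥ u j = lam j • u j := hH.mulVec_eigenvectorBasis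
  have hon : ∀ i j, u i ⬝ᵥ u j = if i = j then 1 else 0 := by
    intro i j
    have := orthonormal_iff_ite.1 hH.eigenvectorBasis.orthonormal i j
    rw [EuclideanSpace.inner_eq_star_dotProduct, dotProduct_comm] at this
    simpa using this
  have hsymm : ∀ v w : Fin k → ℝ, v ⬝ᵥ Q *ᵥ w = (Q *ᵥ v) ⬝ᵥ w := by
    intro v w
    rw [dotProduct_mulVec, ← mulVec_transpose, hQsym]
  have hlam01 : ∀ j, lam j = 0 ∨ lam j = 1 := by
    intro j
    have h1 : Q *ᵥ (Q *ᵥ u j) = Q *ᵥ u j := by rw [mulVec_mulVec, hQidem]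
    rw [hQu, mulVec_smul, hQu] at h1
    have h2 := congrArg (fun v => v ⬝ᵥ u j) h1
    simp only [smul_dotProduct, hon, if_true, smul_eq_mul, mul_one] at h2
    by_cases h : lam j = 0
    · exact Or.inl h
    · exact Or.inr (mul_left_cancel₀ h (by rw [h2, mul_one]))
  have hcard : Fintype.card {j // lam j ≠ 0} = r := by
    rw [← hrank, hH.rank_eq_card_non_zero_eigs]
  have : Nonempty {j // lam j ≠ 0} := Fintype.card_pos_iff.1 (by omega)
  set e : Fin m → Fin k → ℝ := fun i j => d i ⬝ᵥ u j with he
  have hed : ∀ i, (∀ j, lam j ≠ 0 → e i j = 0) ∨ (∀ j, ¬ lam j ≠ 0 → e i j = 0) := by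
    intro i
    have h0 : ∀ j, (Q *ᵥ d i) ⬝ᵥ u j = lam j * e i j := by
      intro j
      rw [← hsymm, hQu, dotProduct_smul, smul_eq_mul]
    rcases hd i with h | h
    · left
      intro j hj
      have := h0 j
      rw [h, zero_dotProduct] at this
      exact (mul_eq_zero.1 this.symm).resolve_left hj
    · right
      intro j hj
      have := h0 j
      rw [h, not_not.1 hj, zero_mul] at this
      exact this
  set S : Set ({j // lam j ≠ 0} → ℝ) :=
    {z | ∀ i, 0 ≤ ∑ j : {j // lam j ≠ 0}, e i j * z j} with hSdef
  set R : Set ({j // ¬ lam j ≠ 0} → ℝ) :=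
    {z | ∀ i, 0 ≤ ∑ j : {j // ¬ lam j ≠ 0}, e i j * z j} with hRdef
  have hSm : MeasurableSet S := by
    rw [hSdef, Set.ofPred_forall]
    exact MeasurableSet.iInter fun i => measurableSet_le measurable_const (by fun_prop)
  have hRm : MeasurableSet R := by
    rw [hRdef, Set.ofPred_forall]
    exact MeasurableSet.iInter fun i => measurableSet_le measurable_const (by fun_prop)
  have hcone : ∀ c : ℝ, 0 < c → ∀ y ∈ S, c • y ∈ S := by
    intro c hc y hy i
    have : ∑ j : {j // lam j ≠ 0}, e i j * (c • y) j = c * ∑ j : {j // lam j ≠ 0}, e i j * y j := by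
      rw [Finset.mul_sum]
      refine Finset.sum_congr rfl fun j _ => ?_
      simp only [Pi.smul_apply, smul_eq_mul]; ring
    rw [this]
    exact mul_nonneg hc.le (hy i)
  have hCm : MeasurableSet C := by
    rw [hC, Set.ofPred_forall]
    exact MeasurableSet.iInter fun i => measurableSet_le measurable_const (by fun_prop)
  have hqm : MeasurableSet {y : Fin k → ℝ | y ⬝ᵥ Q *ᵥ y ≤ x} := by
    refine measurableSet_le ?_ measurable_const
    simp only [dotProduct, mulVec]
    fun_prop
  have hrot := rot hH.eigenvectorBasis
  have hsplit := measurePreserving_piEquivPiSubtypeProd (fun _ : Fin k => gaussianReal 0 1)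
    (fun j => lam j ≠ 0)
  have hCpre : ∀ z : Fin k → ℝ, (∑ j, z j • u j ∈ C) ↔
      (fun j : {j // lam j ≠ 0} => z j) ∈ S ∧ (fun j : {j // ¬ lam j ≠ 0} => z j) ∈ R := by
    intro z
    have h1 : ∀ i, ∑ j, d i j * (∑ l, z l • u l) j =
        (∑ j : {j // lam j ≠ 0}, e i j * z j) + ∑ j : {j // ¬ lam j ≠ 0}, e i j * z j := by
      intro i
      rw [Fintype.sum_subtype_add_sum_subtype (fun j => lam j ≠ 0) (fun j => e i j * z j)]
      change d i ⬝ᵥ (∑ l, z l • u l) = _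
      rw [dotProduct_sum]
      refine Finset.sum_congr rfl fun j _ => ?_
      rw [dotProduct_smul, smul_eq_mul, mul_comm]
    rw [hC, hSdef, hRdef]
    simp only [Set.mem_ofPred_eq, h1]
    rw [← forall_and]
    refine forall_congr' fun i => ?_
    rcases hed i with h | h
    · have : ∑ j : {j // lam j ≠ 0}, e i j * z j = 0 :=
        Finset.sum_eq_zero fun j _ => by rw [h j j.2, zero_mul]
      rw [this]; simp
    · have : ∑ j : {j // ¬ lam j ≠ 0}, e i j * z j = 0 :=
        Finset.sum_eq_zero fun j _ => by rw [h j j.2, zero_mul]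
      rw [this]; simp
  have hQpre : ∀ z : Fin k → ℝ, (∑ j, z j • u j) ⬝ᵥ Q *ᵥ (∑ j, z j • u j) =
      ∑ j : {j // lam j ≠ 0}, z j ^ 2 := by
    intro z
    have h1 : Q *ᵥ (∑ j, z j • u j) = ∑ j, (lam j * z j) • u j := by
      rw [mulVec_sum]
      refine Finset.sum_congr rfl fun j _ => ?_
      rw [mulVec_smul, hQu, smul_smul, mul_comm]
    have h2 : (∑ j, z j • u j) ⬝ᵥ Q *ᵥ (∑ j, z j • u j) = ∑ j, lam j * z j ^ 2 := by
      rw [h1, sum_dotProduct]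
      refine Finset.sum_congr rfl fun j _ => ?_
      rw [dotProduct_sum]
      simp only [dotProduct_smul, smul_dotProduct, hon, smul_eq_mul]
      simp
      ring
    rw [h2, ← Fintype.sum_subtype_add_sum_subtype (fun j => lam j ≠ 0)]
    have : ∑ j : {j // ¬ lam j ≠ 0}, lam j * z j ^ 2 = 0 :=
      Finset.sum_eq_zero fun j _ => by rw [not_not.1 j.2, zero_mul]
    rw [this, add_zero]
    refine Finset.sum_congr rfl fun j _ => ?_
    rw [(hlam01 j).resolve_left j.2, one_mul]
  have hμC' : μ C = (Measure.pi fun _ : {j // lam j ≠ 0} => gaussianReal 0 1) S *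
      (Measure.pi fun _ : {j // ¬ lam j ≠ 0} => gaussianReal 0 1) R := by
    rw [hμ, ← hrot.measure_preimage hCm.nullMeasurableSet, ← Measure.prod_prod,
      ← hsplit.measure_preimage (hSm.prod hRm).nullMeasurableSet]
    congr 1
    ext z
    exact hCpre z
  have hμD : μ {y ∈ C | y ⬝ᵥ Q.mulVec y ≤ x} =
      (Measure.pi fun _ : {j // lam j ≠ 0} => gaussianReal 0 1)
        (S ∩ {y | ∑ i, y i ^ 2 ≤ x}) *
      (Measure.pi fun _ : {j // ¬ lam j ≠ 0} => gaussianReal 0 1) R := by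
    have hm2 : MeasurableSet (S ∩ {y | ∑ i, y i ^ 2 ≤ x}) :=
      hSm.inter (measurableSet_le (by fun_prop) measurable_const)
    rw [hμ, ← hrot.measure_preimage (s := {y ∈ C | y ⬝ᵥ Q.mulVec y ≤ x})
      (hCm.inter hqm).nullMeasurableSet, ← Measure.prod_prod,
      ← hsplit.measure_preimage (hm2.prod hRm).nullMeasurableSet]
    congr 1
    ext z
    have h1 := hCpre z
    have h2 := hQpre z
    change ((∑ j, z j • u j ∈ C) ∧ (∑ j, z j • u j) ⬝ᵥ Q *ᵥ (∑ j, z j • u j) ≤ x) ↔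
      (((fun j : {j // lam j ≠ 0} => z j) ∈ S ∧ ∑ j : {j // lam j ≠ 0}, z j ^ 2 ≤ x) ∧
        (fun j : {j // ¬ lam j ≠ 0} => z j) ∈ R)
    rw [h1, h2]
    tauto
  have : IsProbabilityMeasure μ := by rw [hμ]; infer_instance
  rw [hμD, gauss_cone S hSm hcone, hcard, mul_right_comm, ← hμC', mul_comm]
  exact ENNReal.mul_div_cancel_right hμC.ne' (measure_ne_top _ _)
end
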